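/- Fix a pmf p on 𝒳ⁿ with p(xⁿ) > 0 for all xⁿ, λ ≥ 0 and a distortion function d: 𝒳ⁿ×𝒳̂ⁿ→[0,∞). In the Blahut–Arimoto-type iteration (from a strictly positive q^{k−1}, set r^k(x̂ⁿ|xⁿ) = q^{k−1}(x̂ⁿ||x^{n−1})2^{−λd(xⁿ,x̂ⁿ)} / Σ_{x̂ⁿ} q^{k−1}(x̂ⁿ||x^{n−1})2^{−λd(xⁿ,x̂ⁿ)}, with q^k induced by p·r^k), define c^k_{x̂ⁿ,x^{n−1}} = q^k(x̂ⁿ||x^{n−1}) / q^{k−1}(x̂ⁿ||x^{n−1}), γ^k(xⁿ) = ( Σ_{x̂ⁿ} q^{k−1}(x̂ⁿ||x^{n−1}) 2^{−λd(xⁿ,x̂ⁿ)} )^{−1}, and D_k = Σ_{xⁿ,x̂ⁿ} p(xⁿ)r^k(x̂ⁿ|xⁿ)d(xⁿ,x̂ⁿ). Then (1/n)·( −λD_k + Σ_{xⁿ} p(xⁿ) log₂ γ^k(xⁿ) − log₂ max_{x̂ⁿ,x^{n−1}} c^k_{x̂ⁿ,x^{n−1}} ) ≤ Rₙ(D_k)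 ≤ (1/n)·( −λD_k + Σ_{xⁿ} p(xⁿ) log₂ γ^k(xⁿ) − Σ_{xⁿ,x̂ⁿ} p(xⁿ)r^k(x̂ⁿ|xⁿ) log₂ c^k_{x̂ⁿ,x^{n−1}} ). -/

import Mathlib

open scoped BigOperators
open Filter

noncomputable section

namespace FFRD

variable {X Y : Type} [Fintype X] [DecidableEq X] [Fintype Y] [DecidableEq Y] {n : ℕ}

/-- `p` is a probability mass function on a finite type. -/
def IsPMF {α : Type} [Fintype α] (p : α → ℝ) : Prop :=
  (∀ a, 0 ≤ p a) ∧ ∑ a, p a = 1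

/-- `r` is a conditional pmf on `Fin n → Y` given `Fin n → X`. -/
def IsCondPMF (r : (Fin n → X) → (Fin n → Y) → ℝ) : Prop :=
  (∀ x y, 0 ≤ r x y) ∧ ∀ x, ∑ y, r x y = 1

/-- The causal conditioning pmf `q_r(ŷⁿ‖x^{n-1})` induced by the joint pmf `p(x)·r(y|x)`:
the product over `i` of the conditional probabilities `P(y_i | y^{i-1}, x^{i-1})`. -/
def causalCond (p : (Fin n → X) → ℝ) (r : (Fin n → X) → (Fin n → Y) → ℝ)
    (x : Fin n → X) (y : Fin n → Y) : ℝ :=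
  ∏ i : Fin n,
    ((∑ x' : Fin n → X, ∑ y' : Fin n → Y,
        if (∀ j, j < i → x' j = x j) ∧ (∀ j, j ≤ i → y' j = y j)
        then p x' * r x' y' else 0) /
      (∑ x' : Fin n → X, ∑ y' : Fin n → Y,
        if (∀ j, j < i → x' j = x j) ∧ (∀ j, j < i → y' j = y j)
        then p x' * r x' y' else 0))

/-- Directed information `I(X̂ⁿ → Xⁿ)` computed from source pmf `p` and conditional pmf `r`. -/
def directedInfo (p : (Fin n → X) → ℝ) (r : (Fin n → X) → (Fin n → Y) → ℝ) : ℝ :=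
  ∑ x, ∑ y, p x * r x y * Real.logb 2 (r x y / causalCond p r x y)

/-- The `n`-th order rate distortion function with feed-forward. -/
def Rn (n : ℕ) (p : (Fin n → X) → ℝ) (d : (Fin n → X) → (Fin n → Y) → ℝ) (D : ℝ) : ℝ :=
  (1 / (n : ℝ)) *
    sInf {v | ∃ r : (Fin n → X) → (Fin n → Y) → ℝ, IsCondPMF r ∧
      (∑ x, ∑ y, p x * r x y * d x y) ≤ D ∧ v = directedInfo p r}

/-- Left shift on sequences. -/
def shift (X : Type) : (ℕ → X) → (ℕ → X) := fun ω k => ω (k + 1)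

/-- The law of the first `n` coordinates under `μ`. -/
def lawFin [MeasurableSpace X] (μ : MeasureTheory.Measure (ℕ → X)) (n : ℕ)
    (x : Fin n → X) : ℝ :=
  (μ {ω | ∀ i : Fin n, ω (i : ℕ) = x i}).toReal

/-- Per-letter distortion extended to blocks of length `L`. -/
def dBlock (d0 : X → Y → ℝ) (L : ℕ) (x : Fin L → X) (y : Fin L → Y) : ℝ :=
  (1 / (L : ℝ)) * ∑ i, d0 (x i) (y i)

end FFRD

namespace FFRD

/-- `q` is a causal conditioning pmf `q(x̂ⁿ‖x^{n−1}) = ∏ᵢ qᵢ(x̂ᵢ | x̂^{i−1}, x^{i−1})`,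
where each factor is a pmf on `Y` depending only on the strict pasts of `x` and `y`. -/
def IsCausalCondKernel {X Y : Type} [Fintype X] [Fintype Y] {n : ℕ}
    (q : (Fin n → X) → (Fin n → Y) → ℝ) : Prop :=
  ∃ qi : Fin n → (Fin n → X) → (Fin n → Y) → Y → ℝ,
    (∀ i x y, (∀ b, 0 ≤ qi i x y b) ∧ ∑ b, qi i x y b = 1) ∧
    (∀ i x x' y y', (∀ j, j < i → x j = x' j) → (∀ j, j < i → y j = y' j) →
      qi i x y = qi i x' y') ∧
    (∀ x y, q x y = ∏ i, qi i x y (y i))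

/-- `I_FF(r, q) = Σ_{xⁿ,x̂ⁿ} p(xⁿ) r(x̂ⁿ|xⁿ) log₂ ( r(x̂ⁿ|xⁿ) / q(x̂ⁿ‖x^{n−1}) )`. -/
def IFF {X Y : Type} [Fintype X] [Fintype Y] {n : ℕ} (p : (Fin n → X) → ℝ)
    (r q : (Fin n → X) → (Fin n → Y) → ℝ) : ℝ :=
  ∑ x, ∑ y, p x * r x y * Real.logb 2 (r x y / q x y)

end FFRD

/-!
The chain rule in the interleaved order `y_0, x_0, y_1, x_1, …` splits any joint law of `(x, y)`
into the product of the conditional laws of the `y_i`, which is the causal conditioning pmf, and the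
product of the conditional laws of the `x_i`. Replacing the first factor by that of another joint
law again gives a (sub-)probability, so `E[q_r / q_{r₁}] ≤ 1` under the law of `r₁`, for every
competitor `r`.

Both bounds come from `r / q = (r / w) · 2^(-λ d) · γ` with `w = q · 2^(-λ d) · γ`. For `r = r₁`
and `q = q₁` one has `w = c · r₁`, which gives the upper bound as the exact value of the directed
information of `r₁`. For an arbitrary `r` and `q = q_r` one has `w = c · r₁ · q_r / q₁`, whose total
mass under `p` is at most `max c` by the above, and Gibbs' inequality gives the lower bound.
-/

namespace FFRD

section Gibbs

variable {α : Type*} [Fintype α] {f g : α → ℝ} {C : ℝ}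

theorem neg_log_le_sum_mul_log_div (hf : ∀ a, 0 ≤ f a) (hf_sum : ∑ a, f a = 1)
    (hg : ∀ a, 0 ≤ g a) (hfg : ∀ a, f a ≠ 0 → g a ≠ 0) (hgC : ∑ a, g a ≤ C) :
    -Real.log C ≤ ∑ a, f a * Real.log (f a / g a) := by
  have hC : 0 < C := by
    obtain ⟨a, -, ha⟩ := Finset.exists_ne_zero_of_sum_ne_zero (hf_sum ▸ one_ne_zero)
    exact ((hg a).lt_of_ne' (hfg a ha)).trans_le
      ((Finset.single_le_sum (fun b _ => hg b) (Finset.mem_univ a)).trans hgC)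
  have pointwise (a : α) : f a - g a / C - f a * Real.log C ≤ f a * Real.log (f a / g a) := by
    rcases (hf a).eq_or_lt with hfa | hfa
    · simpa [← hfa] using div_nonneg (hg a) hC.le
    have hga : 0 < g a := (hg a).lt_of_ne' (hfg a hfa.ne')
    have hlog : 1 - (f a / g a * C)⁻¹ ≤ Real.log (f a / g a) + Real.log C := by
      rw [← Real.log_mul (by positivity) hC.ne']
      exact Real.one_sub_inv_le_log_of_pos (by positivity)
    calc f a - g a / C - f a * Real.log C
        = f a * (1 - (f a / g a * C)⁻¹ - Real.log C) := by field_simp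
      _ ≤ f a * Real.log (f a / g a) := by gcongr; linarith
  calc -Real.log C ≤ 1 - (∑ a, g a) / C - Real.log C := by
        linarith [(div_le_one hC).2 hgC]
    _ = ∑ a, (f a - g a / C - f a * Real.log C) := by
        rw [Finset.sum_sub_distrib, Finset.sum_sub_distrib, ← Finset.sum_div, ← Finset.sum_mul,
          hf_sum, one_mul]
    _ ≤ ∑ a, f a * Real.log (f a / g a) := Finset.sum_le_sum fun a _ => pointwise a

theorem neg_logb_le_sum_mul_logb_div {b : ℝ} (hb : 1 < b) (hf : ∀ a, 0 ≤ f a)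
    (hf_sum : ∑ a, f a = 1) (hg : ∀ a, 0 ≤ g a) (hfg : ∀ a, f a ≠ 0 → g a ≠ 0)
    (hgC : ∑ a, g a ≤ C) : -Real.logb b C ≤ ∑ a, f a * Real.logb b (f a / g a) := by
  simp only [Real.logb, mul_div_assoc', ← Finset.sum_div, ← neg_div]
  exact div_le_div_of_nonneg_right (neg_log_le_sum_mul_log_div hf hf_sum hg hfg hgC)
    (Real.log_pos hb).le

end Gibbs

theorem sum_prod_le_one_of_dependsOn_Iic {Z R : Type*} [Fintype Z] [CommSemiring R]
    [PartialOrder R] [IsOrderedRing R] {n : ℕ} {f : Fin n → (Fin n → Z) → R}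
    (hf : ∀ i z, 0 ≤ f i z) (hf_dep : ∀ i, DependsOn (f i) (Set.Iic i))
    (hf_sum : ∀ i z, ∑ a, f i (Function.update z i a) ≤ 1) :
    ∑ z, ∏ i, f i z ≤ 1 := by
  induction n with
  | zero => simp
  | succ n ih =>
    rcases isEmpty_or_nonempty Z with _ | ⟨⟨a₀⟩⟩
    · simp
    have tail_le_one (a : Z) : ∑ z : Fin n → Z, ∏ i : Fin n, f i.succ (Fin.cons a z) ≤ 1 := by
      refine ih (fun i z => hf _ _) (fun i z z' hz => hf_dep i.succ fun j hj => ?_) fun i z => ?_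
      · cases j using Fin.cases with
        | zero => rfl
        | succ j => exact hz j (Fin.succ_le_succ_iff.1 hj)
      · simpa only [Fin.cons_update] using hf_sum i.succ (Fin.cons a z)
    have head_eq (a : Z) (z : Fin n → Z) :
        f 0 (Fin.cons a z) = f 0 (Function.update (fun _ => a₀) 0 a) :=
      hf_dep 0 fun j hj => by simp [Fin.le_zero_iff.1 hj]
    calc ∑ z, ∏ i, f i z
        = ∑ a, f 0 (Function.update (fun _ => a₀) 0 a) *
            ∑ z : Fin n → Z, ∏ i : Fin n, f i.succ (Fin.cons a z) := by
          rw [← (Fin.consEquiv fun _ => Z).sum_comp, Fintype.sum_prod_type]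
          simp only [Fin.consEquiv, Equiv.coe_fn_mk, Fin.prod_univ_succ, head_eq, Finset.mul_sum]
      _ ≤ ∑ a, f 0 (Function.update (fun _ => a₀) 0 a) :=
          Finset.sum_le_sum fun a _ => mul_le_of_le_one_right (hf _ _) (tail_le_one a)
      _ ≤ 1 := hf_sum 0 _

theorem prod_fin_div_eq_div {K : Type*} [Field K] {n : ℕ} (g : ℕ → K) (hg : ∀ k, g k ≠ 0) :
    ∏ i : Fin n, g (i + 1) / g i = g n / g 0 := by
  rw [Fin.prod_univ_eq_prod_range (fun i => g (i + 1) / g i)]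
  exact Finset.prod_range_induction _ (fun k => g k / g 0) (div_self (hg 0)) n
    fun k _ => by rw [mul_comm, div_mul_div_cancel₀ (hg k)]

section CylinderMass

variable {ι κ X Y : Type*} [Fintype ι] [DecidableEq ι] [Fintype κ] [DecidableEq κ]
  [Fintype X] [DecidableEq X] [Fintype Y] [DecidableEq Y] {P : (ι → X) → (κ → Y) → ℝ}

/-- The `P`-mass of the cylinder of all pairs that agree with `x` on `S` and with `y` on `T`, that
is, the marginal of `P` on the coordinates in `S` and `T`. -/
def cylinderMass (P : (ι → X) → (κ → Y) → ℝ) (S : Finset ι) (T : Finset κ)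
    (x : ι → X) (y : κ → Y) : ℝ :=
  ∑ x', ∑ y', if (∀ j ∈ S, x' j = x j) ∧ (∀ j ∈ T, y' j = y j) then P x' y' else 0

theorem cylinderMass_swap (P : (ι → X) → (κ → Y) → ℝ) (S : Finset ι) (T : Finset κ)
    (x : ι → X) (y : κ → Y) :
    cylinderMass (Function.swap P) T S y x = cylinderMass P S T x y := by
  simp only [cylinderMass, Function.swap, and_comm]
  exact Finset.sum_comm

theorem cylinderMass_nonneg (hP : ∀ x y, 0 ≤ P x y) (S : Finset ι) (T : Finset κ)
    (x : ι → X) (y : κ → Y) : 0 ≤ cylinderMass P S T x y :=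
  Finset.sum_nonneg fun x' _ => Finset.sum_nonneg fun y' _ => ite_nonneg (hP x' y') le_rfl

theorem le_cylinderMass (hP : ∀ x y, 0 ≤ P x y) (S : Finset ι) (T : Finset κ)
    (x : ι → X) (y : κ → Y) : P x y ≤ cylinderMass P S T x y := by
  let F (x' : ι → X) (y' : κ → Y) : ℝ :=
    if (∀ j ∈ S, x' j = x j) ∧ (∀ j ∈ T, y' j = y j) then P x' y' else 0
  have hF (x' : ι → X) (y' : κ → Y) : 0 ≤ F x' y' := ite_nonneg (hP x' y') le_rfl
  calc P x y = F x y := by simp [F]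
    _ ≤ ∑ y', F x y' := Finset.single_le_sum (fun y' _ => hF x y') (Finset.mem_univ y)
    _ ≤ ∑ x', ∑ y', F x' y' := Finset.single_le_sum (f := fun x' => ∑ y', F x' y')
        (fun x' _ => Finset.sum_nonneg fun y' _ => hF x' y') (Finset.mem_univ x)

theorem cylinderMass_congr {S : Finset ι} {T : Finset κ} {x x' : ι → X} {y y' : κ → Y}
    (hx : ∀ j ∈ S, x j = x' j) (hy : ∀ j ∈ T, y j = y' j) :
    cylinderMass P S T x y = cylinderMass P S T x' y' := by
  have hS (u : ι → X) : (∀ j ∈ S, u j = x j) ↔ ∀ j ∈ S, u j = x' j :=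
    forall₂_congr fun j hj => by rw [hx j hj]
  have hT (v : κ → Y) : (∀ j ∈ T, v j = y j) ↔ ∀ j ∈ T, v j = y' j :=
    forall₂_congr fun j hj => by rw [hy j hj]
  simp only [cylinderMass, hS, hT]

theorem cylinderMass_update_left {S : Finset ι} {k : ι} (hk : k ∉ S) (T : Finset κ)
    (x : ι → X) (y : κ → Y) (a : X) :
    cylinderMass P S T (Function.update x k a) y = cylinderMass P S T x y :=
  cylinderMass_congr (fun _ hj => Function.update_of_ne (ne_of_mem_of_not_mem hj hk) _ _)
    fun _ _ => rfl

theorem cylinderMass_update_right (S : Finset ι) {T : Finset κ} {k : κ} (hk : k ∉ T)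
    (x : ι → X) (y : κ → Y) (b : Y) :
    cylinderMass P S T x (Function.update y k b) = cylinderMass P S T x y :=
  cylinderMass_congr (fun _ _ => rfl)
    fun _ hj => Function.update_of_ne (ne_of_mem_of_not_mem hj hk) _ _

theorem cylinderMass_empty (x : ι → X) (y : κ → Y) :
    cylinderMass P ∅ ∅ x y = ∑ x', ∑ y', P x' y' := by
  simp [cylinderMass]

theorem cylinderMass_univ (x : ι → X) (y : κ → Y) :
    cylinderMass P Finset.univ Finset.univ x y = P x y := by
  simp [cylinderMass, ← funext_iff, ite_and]

theorem sum_cylinderMass_insert_left {S : Finset ι} {k : ι} (hk : k ∉ S) (T : Finset κ)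
    (x : ι → X) (y : κ → Y) :
    ∑ a, cylinderMass P (insert k S) T (Function.update x k a) y = cylinderMass P S T x y := by
  have agree_iff (u : ι → X) (a : X) :
      (∀ j ∈ insert k S, u j = Function.update x k a j) ↔ u k = a ∧ ∀ j ∈ S, u j = x j := by
    rw [Finset.forall_mem_insert, Function.update_self]
    exact and_congr_right fun _ => forall₂_congr fun j hj => by
      rw [Function.update_of_ne (ne_of_mem_of_not_mem hj hk)]
  simp only [cylinderMass, agree_iff]
  rw [Finset.sum_comm]
  refine Finset.sum_congr rfl fun u _ => ?_
  rw [Finset.sum_comm]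
  simp [and_assoc, ite_and]

theorem sum_cylinderMass_insert_right (S : Finset ι) {T : Finset κ} {k : κ} (hk : k ∉ T)
    (x : ι → X) (y : κ → Y) :
    ∑ b, cylinderMass P S (insert k T) x (Function.update y k b) = cylinderMass P S T x y := by
  simpa only [cylinderMass_swap] using
    sum_cylinderMass_insert_left (P := Function.swap P) hk S y x

end CylinderMass

section Prediction

variable {X Y : Type*} [Fintype X] [DecidableEq X] [Fintype Y] [DecidableEq Y] {n : ℕ}
  {P Q : (Fin n → X) → (Fin n → Y) → ℝ}

/-- The conditional probability `P(y_i | y^{i-1}, x^{i-1})`, with value `0` if the condition has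
mass `0`. -/
def reproductionCond (P : (Fin n → X) → (Fin n → Y) → ℝ) (i : Fin n)
    (x : Fin n → X) (y : Fin n → Y) : ℝ :=
  cylinderMass P (Finset.Iio i) (Finset.Iic i) x y /
    cylinderMass P (Finset.Iio i) (Finset.Iio i) x y

/-- The conditional probability `P(x_i | y^i, x^{i-1})`, with value `0` if the condition has
mass `0`. -/
def sourceCond (P : (Fin n → X) → (Fin n → Y) → ℝ) (i : Fin n)
    (x : Fin n → X) (y : Fin n → Y) : ℝ :=
  cylinderMass P (Finset.Iic i) (Finset.Iic i) x y /
    cylinderMass P (Finset.Iio i) (Finset.Iic i) x y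

theorem reproductionCond_nonneg (hP : ∀ x y, 0 ≤ P x y) (i : Fin n) (x : Fin n → X)
    (y : Fin n → Y) : 0 ≤ reproductionCond P i x y :=
  div_nonneg (cylinderMass_nonneg hP _ _ _ _) (cylinderMass_nonneg hP _ _ _ _)

theorem reproductionCond_pos (hP : ∀ x y, 0 ≤ P x y) (i : Fin n) {x : Fin n → X}
    {y : Fin n → Y} (hxy : 0 < P x y) : 0 < reproductionCond P i x y :=
  div_pos (hxy.trans_le (le_cylinderMass hP _ _ _ _)) (hxy.trans_le (le_cylinderMass hP _ _ _ _))

theorem sourceCond_nonneg (hP : ∀ x y, 0 ≤ P x y) (i : Fin n) (x : Fin n → X)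
    (y : Fin n → Y) : 0 ≤ sourceCond P i x y :=
  div_nonneg (cylinderMass_nonneg hP _ _ _ _) (cylinderMass_nonneg hP _ _ _ _)

theorem reproductionCond_congr {i : Fin n} {x x' : Fin n → X} {y y' : Fin n → Y}
    (hx : ∀ j < i, x j = x' j) (hy : ∀ j ≤ i, y j = y' j) :
    reproductionCond P i x y = reproductionCond P i x' y' := by
  have hx' : ∀ j ∈ Finset.Iio i, x j = x' j := fun j hj => hx j (Finset.mem_Iio.1 hj)
  exact congrArg₂ (· / ·) (cylinderMass_congr hx' fun j hj => hy j (Finset.mem_Iic.1 hj))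
    (cylinderMass_congr hx' fun j hj => hy j (Finset.mem_Iio.1 hj).le)

theorem sourceCond_congr {i : Fin n} {x x' : Fin n → X} {y y' : Fin n → Y}
    (hx : ∀ j ≤ i, x j = x' j) (hy : ∀ j ≤ i, y j = y' j) :
    sourceCond P i x y = sourceCond P i x' y' := by
  have hy' : ∀ j ∈ Finset.Iic i, y j = y' j := fun j hj => hy j (Finset.mem_Iic.1 hj)
  exact congrArg₂ (· / ·) (cylinderMass_congr (fun j hj => hx j (Finset.mem_Iic.1 hj)) hy')
    (cylinderMass_congr (fun j hj => hx j (Finset.mem_Iio.1 hj).le) hy')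

theorem sum_reproductionCond_update_le_one (i : Fin n) (x : Fin n → X) (y : Fin n → Y) :
    ∑ b, reproductionCond P i x (Function.update y i b) ≤ 1 := by
  have hi : i ∉ Finset.Iio i := Finset.notMem_Iio_self
  simp only [reproductionCond, cylinderMass_update_right _ hi, ← Finset.sum_div,
    ← Finset.Iio_insert i, sum_cylinderMass_insert_right _ hi]
  exact div_self_le_one _

theorem sum_sourceCond_update_le_one (i : Fin n) (x : Fin n → X) (y : Fin n → Y) :
    ∑ a, sourceCond P i (Function.update x i a) y ≤ 1 := by
  have hi : i ∉ Finset.Iio i := Finset.notMem_Iio_self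
  have hsum := sum_cylinderMass_insert_left (P := P) hi (Finset.Iic i) x y
  rw [Finset.Iio_insert] at hsum
  simp only [sourceCond, cylinderMass_update_left hi, ← Finset.sum_div, hsum]
  exact div_self_le_one _

theorem sum_reproductionCond_mul_sourceCond_update_le_one (hQ : ∀ x y, 0 ≤ Q x y) (i : Fin n)
    (x : Fin n → X) (y : Fin n → Y) :
    ∑ b, ∑ a, reproductionCond Q i (Function.update x i a) (Function.update y i b) *
      sourceCond P i (Function.update x i a) (Function.update y i b) ≤ 1 := by
  have reproductionCond_update_left (a : X) (y' : Fin n → Y) :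
      reproductionCond Q i (Function.update x i a) y' = reproductionCond Q i x y' :=
    reproductionCond_congr (fun j hj => Function.update_of_ne hj.ne _ _) fun _ _ => rfl
  simp only [reproductionCond_update_left, ← Finset.mul_sum]
  calc ∑ b, reproductionCond Q i x (Function.update y i b) *
        ∑ a, sourceCond P i (Function.update x i a) (Function.update y i b)
      ≤ ∑ b, reproductionCond Q i x (Function.update y i b) :=
        Finset.sum_le_sum fun b _ => mul_le_of_le_one_right (reproductionCond_nonneg hQ _ _ _)
          (sum_sourceCond_update_le_one i x _)
    _ ≤ 1 := sum_reproductionCond_update_le_one i x y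

theorem sum_prod_reproductionCond_mul_sourceCond_le_one (hP : ∀ x y, 0 ≤ P x y)
    (hQ : ∀ x y, 0 ≤ Q x y) :
    ∑ x, ∑ y, ∏ i, reproductionCond Q i x y * sourceCond P i x y ≤ 1 := by
  rw [← Fintype.sum_prod_type', ← (Equiv.arrowProdEquivProdArrow _ _ _).sum_comp]
  refine sum_prod_le_one_of_dependsOn_Iic
    (fun i z => mul_nonneg (reproductionCond_nonneg hQ _ _ _) (sourceCond_nonneg hP _ _ _))
    (fun i z z' hz => ?_) fun i z => ?_
  · have hfst : ∀ j ≤ i, (z j).1 = (z' j).1 := fun j hj => congrArg Prod.fst (hz j hj)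
    have hsnd : ∀ j ≤ i, (z j).2 = (z' j).2 := fun j hj => congrArg Prod.snd (hz j hj)
    exact congrArg₂ (· * ·) (reproductionCond_congr (fun j hj => hfst j hj.le) hsnd)
      (sourceCond_congr hfst hsnd)
  · rw [Fintype.sum_prod_type_right]
    have update_fst (a : X) (b : Y) :
        (fun j => (Function.update z i (a, b) j).1) = Function.update (fun j => (z j).1) i a :=
      Function.comp_update Prod.fst z i (a, b)
    have update_snd (a : X) (b : Y) :
        (fun j => (Function.update z i (a, b) j).2) = Function.update (fun j => (z j).2) i b :=
      Function.comp_update Prod.snd z i (a, b)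
    simp only [Equiv.arrowProdEquivProdArrow, Equiv.coe_fn_mk, update_fst, update_snd]
    exact sum_reproductionCond_mul_sourceCond_update_le_one hQ i _ _

theorem prod_reproductionCond_mul_prod_sourceCond (hP : ∀ x y, 0 ≤ P x y)
    (hP_sum : ∑ x, ∑ y, P x y = 1) {x : Fin n → X} {y : Fin n → Y} (hxy : 0 < P x y) :
    (∏ i, reproductionCond P i x y) * ∏ i, sourceCond P i x y = P x y := by
  let past (k : ℕ) : Finset (Fin n) := {j | (j : ℕ) < k}
  let mass (k : ℕ) : ℝ := cylinderMass P (past k) (past k) x y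
  have mass_ne_zero (k : ℕ) : mass k ≠ 0 := (hxy.trans_le (le_cylinderMass hP _ _ _ _)).ne'
  have factor (i : Fin n) :
      reproductionCond P i x y * sourceCond P i x y = mass (i + 1) / mass i := by
    have past_self : past i = Finset.Iio i := by ext j; simp [past]
    have past_succ : past (i + 1) = Finset.Iic i := by ext j; simp [past]
    simp only [mass, past_self, past_succ, reproductionCond, sourceCond]
    rw [mul_comm, div_mul_div_cancel₀ (hxy.trans_le (le_cylinderMass hP _ _ _ _)).ne']
  have mass_zero : mass 0 = 1 := by simp [mass, past, cylinderMass_empty, hP_sum]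
  have mass_last : mass n = P x y := by simp [mass, past, cylinderMass_univ]
  rw [← Finset.prod_mul_distrib, Finset.prod_congr rfl fun i _ => factor i,
    prod_fin_div_eq_div mass mass_ne_zero, mass_zero, mass_last, div_one]

end Prediction

section CausalCond

variable {X Y : Type} [Fintype X] [DecidableEq X] [Fintype Y] [DecidableEq Y] {n : ℕ}
  {p : (Fin n → X) → ℝ} {r s : (Fin n → X) → (Fin n → Y) → ℝ}

theorem causalCond_eq_prod_reproductionCond (p : (Fin n → X) → ℝ)
    (r : (Fin n → X) → (Fin n → Y) → ℝ) (x : Fin n → X) (y : Fin n → Y) :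
    causalCond p r x y = ∏ i, reproductionCond (fun x y => p x * r x y) i x y := by
  simp only [causalCond, reproductionCond, cylinderMass, Finset.mem_Iio, Finset.mem_Iic]

theorem causalCond_nonneg (hpr : ∀ x y, 0 ≤ p x * r x y) (x : Fin n → X) (y : Fin n → Y) :
    0 ≤ causalCond p r x y := by
  rw [causalCond_eq_prod_reproductionCond]
  exact Finset.prod_nonneg fun i _ => reproductionCond_nonneg hpr i x y

theorem causalCond_pos (hpr : ∀ x y, 0 ≤ p x * r x y) {x : Fin n → X} {y : Fin n → Y}
    (hxy : 0 < p x * r x y) : 0 < causalCond p r x y := by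
  rw [causalCond_eq_prod_reproductionCond]
  exact Finset.prod_pos fun i _ => reproductionCond_pos hpr i hxy

theorem sum_mul_causalCond_div_causalCond_le_one (hpr : ∀ x y, 0 ≤ p x * r x y)
    (hpr_sum : ∑ x, ∑ y, p x * r x y = 1) (hps : ∀ x y, 0 ≤ p x * s x y) :
    ∑ x, ∑ y, p x * r x y * (causalCond p s x y / causalCond p r x y) ≤ 1 := by
  refine le_trans (Finset.sum_le_sum fun x _ => Finset.sum_le_sum fun y _ => ?_)
    (sum_prod_reproductionCond_mul_sourceCond_le_one hpr hps)
  rw [Finset.prod_mul_distrib, ← causalCond_eq_prod_reproductionCond]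
  rcases (hpr x y).eq_or_lt with h_zero | h_pos
  · rw [← h_zero, zero_mul]
    exact mul_nonneg (causalCond_nonneg hps x y)
      (Finset.prod_nonneg fun i _ => sourceCond_nonneg hpr i x y)
  · have hchain := prod_reproductionCond_mul_prod_sourceCond hpr hpr_sum h_pos
    rw [← causalCond_eq_prod_reproductionCond] at hchain
    have hq := (causalCond_pos hpr h_pos).ne'
    rw [← hchain]
    exact le_of_eq (by field_simp)

end CausalCond

section Tilt

variable {α β : Type*} {γ : α → ℝ} {lam : ℝ} {d q : α → β → ℝ}

/-- The kernel `q(y|x) 2^{-λ d(x, y)} γ(x)`. For `γ` the inverse of the normalizing sum of `q₀` this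
is the Blahut–Arimoto update when `q = q₀`; it need not be normalized for other `q`. -/
def tilt (lam : ℝ) (d : α → β → ℝ) (γ : α → ℝ) (q : α → β → ℝ) (x : α) (y : β) : ℝ :=
  q x y * 2 ^ (-(lam * d x y)) * γ x

theorem tilt_nonneg (hγ : ∀ x, 0 < γ x) {x : α} {y : β} (hq : 0 ≤ q x y) :
    0 ≤ tilt lam d γ q x y :=
  mul_nonneg (mul_nonneg hq (by positivity)) (hγ x).le

theorem tilt_pos (hγ : ∀ x, 0 < γ x) {x : α} {y : β} (hq : 0 < q x y) :
    0 < tilt lam d γ q x y :=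
  mul_pos (mul_pos hq (by positivity)) (hγ x)

theorem tilt_div_tilt (hγ : ∀ x, 0 < γ x) (q q' : α → β → ℝ) (x : α) (y : β) :
    tilt lam d γ q x y / tilt lam d γ q' x y = q x y / q' x y := by
  rw [tilt, tilt, mul_div_mul_right _ _ (hγ x).ne', mul_div_mul_right _ _ (by positivity)]

theorem sum_tilt_eq_one [Fintype β] (hγ : ∀ x, 0 < γ x)
    (hγ_eq : ∀ x, γ x = (∑ y, q x y * 2 ^ (-(lam * d x y)))⁻¹) (x : α) :
    ∑ y, tilt lam d γ q x y = 1 := by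
  simp only [tilt]
  rw [← Finset.sum_mul, ← inv_inv (∑ y, _), ← hγ_eq, inv_mul_cancel₀ (hγ x).ne']

end Tilt

section CondPMF

variable {X Y : Type} [Fintype X] [Fintype Y] {n : ℕ} {p γ : (Fin n → X) → ℝ} {lam C : ℝ}
  {d q r w : (Fin n → X) → (Fin n → Y) → ℝ}

theorem sum_mul_eq_one (hp : IsPMF p) (hr : IsCondPMF r) : ∑ x, ∑ y, p x * r x y = 1 := by
  simp only [← Finset.mul_sum, hr.2, mul_one, hp.2]

theorem neg_logb_le_IFF (hp : IsPMF p) (hr : IsCondPMF r) (hw : ∀ x y, 0 ≤ w x y)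
    (hrw : ∀ x y, p x * r x y ≠ 0 → w x y ≠ 0) (hwC : ∑ x, ∑ y, p x * w x y ≤ C) :
    -Real.logb 2 C ≤ IFF p r w := by
  have gibbs := neg_logb_le_sum_mul_logb_div (b := 2) one_lt_two
    (f := fun z : (Fin n → X) × (Fin n → Y) => p z.1 * r z.1 z.2)
    (g := fun z => p z.1 * w z.1 z.2) (C := C)
    (fun z => mul_nonneg (hp.1 _) (hr.1 _ _))
    (by rw [Fintype.sum_prod_type]; exact sum_mul_eq_one hp hr)
    (fun z => mul_nonneg (hp.1 _) (hw _ _))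
    (fun z hz => mul_ne_zero (left_ne_zero_of_mul hz) (hrw _ _ hz))
    (by rwa [Fintype.sum_prod_type])
  rw [Fintype.sum_prod_type] at gibbs
  refine gibbs.trans_eq (Finset.sum_congr rfl fun x _ => Finset.sum_congr rfl fun y _ => ?_)
  rcases eq_or_ne (p x) 0 with hx | hx
  · simp [hx]
  · rw [mul_div_mul_left _ _ hx]

theorem IFF_eq_IFF_tilt_add (hr : ∀ x, ∑ y, r x y = 1) (hγ : ∀ x, 0 < γ x)
    (hrq : ∀ x y, p x * r x y ≠ 0 → q x y ≠ 0) :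
    IFF p r q = IFF p r (tilt lam d γ q) +
      (-(lam * ∑ x, ∑ y, p x * r x y * d x y) + ∑ x, p x * Real.logb 2 (γ x)) := by
  have pointwise (x : Fin n → X) (y : Fin n → Y) :
      p x * r x y * Real.logb 2 (r x y / q x y) =
        p x * r x y * Real.logb 2 (r x y / tilt lam d γ q x y) +
          (-(lam * (p x * r x y * d x y)) + p x * r x y * Real.logb 2 (γ x)) := by
    rcases eq_or_ne (p x * r x y) 0 with hpr | hpr
    · simp [hpr]
    have hr_ne : r x y ≠ 0 := right_ne_zero_of_mul hpr
    have hpow : (2 : ℝ) ^ (-(lam * d x y)) ≠ 0 := by positivity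
    have hq_ne := hrq x y hpr
    rw [tilt, Real.logb_div hr_ne hq_ne,
      Real.logb_div hr_ne (mul_ne_zero (mul_ne_zero hq_ne hpow) (hγ x).ne'),
      Real.logb_mul (mul_ne_zero hq_ne hpow) (hγ x).ne', Real.logb_mul hq_ne hpow,
      Real.logb_rpow two_pos (by norm_num)]
    ring
  simp only [IFF, pointwise, Finset.sum_add_distrib, Finset.sum_neg_distrib, ← Finset.mul_sum]
  simp only [← Finset.sum_mul, ← Finset.mul_sum, hr, mul_one]

end CondPMF

section BlahutArimoto

variable {X Y : Type} [Fintype X] [DecidableEq X] [Fintype Y] [DecidableEq Y] {n : ℕ}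
  {p γ : (Fin n → X) → ℝ} {lam C : ℝ} {d q₀ r : (Fin n → X) → (Fin n → Y) → ℝ}

theorem directedInfo_eq_IFF_tilt_add (hp : IsPMF p) (hr : IsCondPMF r) (hγ : ∀ x, 0 < γ x) :
    directedInfo p r = IFF p r (tilt lam d γ (causalCond p r)) +
      (-(lam * ∑ x, ∑ y, p x * r x y * d x y) + ∑ x, p x * Real.logb 2 (γ x)) := by
  have hpr (x y) : 0 ≤ p x * r x y := mul_nonneg (hp.1 x) (hr.1 x y)
  exact IFF_eq_IFF_tilt_add hr.2 hγ fun x y hxy =>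
    (causalCond_pos hpr ((hpr x y).lt_of_ne' hxy)).ne'

theorem directedInfo_tilt (hp : IsPMF p) (hγ : ∀ x, 0 < γ x)
    (h_tilt : IsCondPMF (tilt lam d γ q₀)) :
    directedInfo p (tilt lam d γ q₀) =
      -(lam * ∑ x, ∑ y, p x * tilt lam d γ q₀ x y * d x y) + ∑ x, p x * Real.logb 2 (γ x) -
        ∑ x, ∑ y, p x * tilt lam d γ q₀ x y *
          Real.logb 2 (causalCond p (tilt lam d γ q₀) x y / q₀ x y) := by
  have log_ratio (x y) :
      Real.logb 2 (tilt lam d γ q₀ x y / tilt lam d γ (causalCond p (tilt lam d γ q₀)) x y) =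
        -Real.logb 2 (causalCond p (tilt lam d γ q₀) x y / q₀ x y) := by
    rw [tilt_div_tilt hγ, ← Real.logb_inv, inv_div]
  rw [directedInfo_eq_IFF_tilt_add (lam := lam) (d := d) hp h_tilt hγ]
  simp only [IFF, log_ratio, mul_neg, Finset.sum_neg_distrib]
  ring

theorem sum_mul_tilt_causalCond_le (hp : IsPMF p) (hq₀ : ∀ x y, 0 < q₀ x y)
    (hγ : ∀ x, 0 < γ x) (h_tilt : IsCondPMF (tilt lam d γ q₀)) (hC : 0 ≤ C)
    (hqC : ∀ x y, causalCond p (tilt lam d γ q₀) x y / q₀ x y ≤ C) (hr : IsCondPMF r) :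
    ∑ x, ∑ y, p x * tilt lam d γ (causalCond p r) x y ≤ C := by
  set r₁ := tilt lam d γ q₀
  have hpr (x y) : 0 ≤ p x * r x y := mul_nonneg (hp.1 x) (hr.1 x y)
  have hpr₁ (x y) : 0 ≤ p x * r₁ x y := mul_nonneg (hp.1 x) (h_tilt.1 x y)
  have pointwise (x y) : p x * tilt lam d γ (causalCond p r) x y ≤
      C * (p x * r₁ x y * (causalCond p r x y / causalCond p r₁ x y)) := by
    rcases (hp.1 x).eq_or_lt with hx | hx
    · simp [← hx]
    have hr₁_pos : 0 < r₁ x y := tilt_pos hγ (hq₀ x y)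
    have hq₀_ne := (hq₀ x y).ne'
    have hq₁_pos := causalCond_pos hpr₁ (mul_pos hx hr₁_pos)
    calc p x * tilt lam d γ (causalCond p r) x y
        = causalCond p r₁ x y / q₀ x y *
            (p x * r₁ x y * (causalCond p r x y / causalCond p r₁ x y)) := by
          have hq₁_ne := hq₁_pos.ne'
          rw [show r₁ x y = q₀ x y * 2 ^ (-(lam * d x y)) * γ x from rfl, tilt]
          field_simp
      _ ≤ C * (p x * r₁ x y * (causalCond p r x y / causalCond p r₁ x y)) :=
          mul_le_mul_of_nonneg_right (hqC x y)
            (mul_nonneg (hpr₁ x y) (div_nonneg (causalCond_nonneg hpr x y) hq₁_pos.le))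
  calc ∑ x, ∑ y, p x * tilt lam d γ (causalCond p r) x y
      ≤ ∑ x, ∑ y, C * (p x * r₁ x y * (causalCond p r x y / causalCond p r₁ x y)) :=
        Finset.sum_le_sum fun x _ => Finset.sum_le_sum fun y _ => pointwise x y
    _ = C * ∑ x, ∑ y, p x * r₁ x y * (causalCond p r x y / causalCond p r₁ x y) := by
        simp only [Finset.mul_sum]
    _ ≤ C := mul_le_of_le_one_right hC
        (sum_mul_causalCond_div_causalCond_le_one hpr₁ (sum_mul_eq_one hp h_tilt) hpr)

theorem sub_logb_iSup_le_directedInfo (hp : IsPMF p) (hq₀ : ∀ x y, 0 < q₀ x y)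
    (hγ : ∀ x, 0 < γ x) (h_tilt : IsCondPMF (tilt lam d γ q₀)) (hr : IsCondPMF r) :
    -(lam * ∑ x, ∑ y, p x * r x y * d x y) + ∑ x, p x * Real.logb 2 (γ x) -
        Real.logb 2 (⨆ z : (Fin n → X) × (Fin n → Y),
          causalCond p (tilt lam d γ q₀) z.1 z.2 / q₀ z.1 z.2) ≤
      directedInfo p r := by
  have hpr (x y) : 0 ≤ p x * r x y := mul_nonneg (hp.1 x) (hr.1 x y)
  have hpr₁ (x y) : 0 ≤ p x * tilt lam d γ q₀ x y := mul_nonneg (hp.1 x) (h_tilt.1 x y)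
  have mass_le := sum_mul_tilt_causalCond_le hp hq₀ hγ h_tilt
    (Real.iSup_nonneg fun z : (Fin n → X) × (Fin n → Y) =>
      div_nonneg (causalCond_nonneg hpr₁ z.1 z.2) (hq₀ z.1 z.2).le)
    (fun x y => le_ciSup (f := fun z : (Fin n → X) × (Fin n → Y) =>
      causalCond p (tilt lam d γ q₀) z.1 z.2 / q₀ z.1 z.2) (Set.finite_range _).bddAbove (x, y)) hr
  have gibbs := neg_logb_le_IFF hp hr (fun x y => tilt_nonneg hγ (causalCond_nonneg hpr x y))
    (fun x y hxy => (tilt_pos hγ (causalCond_pos hpr ((hpr x y).lt_of_ne' hxy))).ne') mass_le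
  rw [directedInfo_eq_IFF_tilt_add hp hr hγ (lam := lam) (d := d)]
  linarith

theorem Rn_mem_Icc_of_forall_le_directedInfo (hn : 1 ≤ n) {D v : ℝ}
    (hv : ∀ s, IsCondPMF s → ∑ x, ∑ y, p x * s x y * d x y ≤ D → v ≤ directedInfo p s)
    (hr : IsCondPMF r) (hrD : ∑ x, ∑ y, p x * r x y * d x y ≤ D) :
    Rn n p d D ∈ Set.Icc (1 / (n : ℝ) * v) (1 / (n : ℝ) * directedInfo p r) := by
  have hn_inv : 0 < 1 / (n : ℝ) := one_div_pos.2 (Nat.cast_pos.2 hn)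
  have lower : v ∈ lowerBounds {v | ∃ s, IsCondPMF s ∧ ∑ x, ∑ y, p x * s x y * d x y ≤ D ∧
      v = directedInfo p s} := by
    rintro _ ⟨s, hs, hsD, rfl⟩
    exact hv s hs hsD
  exact ⟨(mul_le_mul_iff_right₀ hn_inv).2 (le_csInf ⟨_, r, hr, hrD, rfl⟩ lower),
    (mul_le_mul_iff_right₀ hn_inv).2 (csInf_le ⟨v, lower⟩ ⟨r, hr, hrD, rfl⟩)⟩

end BlahutArimoto

end FFRD

open FFRD in
theorem BA_iteration_bounds_general
    {X Y : Type} [Fintype X] [DecidableEq X] [Fintype Y] [Nonempty Y] [DecidableEq Y]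
    (n : ℕ) (hn : 1 ≤ n)
    (p : (Fin n → X) → ℝ) (hp : IsPMF p)
    (lam : ℝ) (hlam : 0 ≤ lam)
    (d : (Fin n → X) → (Fin n → Y) → ℝ)
    (q0 : (Fin n → X) → (Fin n → Y) → ℝ) (hq0pos : ∀ x y, 0 < q0 x y)
    (r1 : (Fin n → X) → (Fin n → Y) → ℝ)
    (hr1 : ∀ x y, r1 x y =
      q0 x y * 2 ^ (-(lam * d x y)) / ∑ y', q0 x y' * 2 ^ (-(lam * d x y')))
    (q1 : (Fin n → X) → (Fin n → Y) → ℝ) (hq1 : q1 = causalCond p r1)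
    (c : (Fin n → X) → (Fin n → Y) → ℝ) (hc : ∀ x y, c x y = q1 x y / q0 x y)
    (γ : (Fin n → X) → ℝ)
    (hγ : ∀ x, γ x = (∑ y, q0 x y * 2 ^ (-(lam * d x y)))⁻¹)
    (Dk : ℝ) (hDk : Dk = ∑ x, ∑ y, p x * r1 x y * d x y) :
    (1 / (n : ℝ)) * (-(lam * Dk) + (∑ x, p x * Real.logb 2 (γ x)) -
        Real.logb 2 (⨆ z : (Fin n → X) × (Fin n → Y), c z.1 z.2)) ≤
      Rn n p d Dk ∧
    Rn n p d Dk ≤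
      (1 / (n : ℝ)) * (-(lam * Dk) + (∑ x, p x * Real.logb 2 (γ x)) -
        ∑ x, ∑ y, p x * r1 x y * Real.logb 2 (c x y)) := by
  have hγ_pos (x) : 0 < γ x := by
    rw [hγ]
    exact inv_pos.2 (Finset.sum_pos (fun y _ => mul_pos (hq0pos x y) (by positivity))
      Finset.univ_nonempty)
  obtain rfl : r1 = tilt lam d γ q0 := by
    ext x y
    rw [hr1, tilt, hγ, div_eq_mul_inv]
  obtain rfl : c = fun x y => causalCond p (tilt lam d γ q0) x y / q0 x y := by
    ext x y
    rw [hc, hq1]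
  have h_tilt : IsCondPMF (tilt lam d γ q0) :=
    ⟨fun x y => (tilt_pos hγ_pos (hq0pos x y)).le, sum_tilt_eq_one hγ_pos hγ⟩
  rw [hDk, ← directedInfo_tilt hp hγ_pos h_tilt]
  refine Rn_mem_Icc_of_forall_le_directedInfo hn (fun r hr hrD => ?_) h_tilt le_rfl
  have := mul_le_mul_of_nonneg_left hrD hlam
  linarith [sub_logb_iSup_le_directedInfo hp hq0pos hγ_pos h_tilt hr]

open FFRD in
/-- Lemma 6: one step of the Blahut–Arimoto-type iteration yields
computable lower and upper bounds sandwiching `Rₙ(D_k)`. -/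
theorem BA_iteration_bounds
    {X Y : Type} [Fintype X] [Nonempty X] [DecidableEq X] [Fintype Y] [Nonempty Y]
    [DecidableEq Y]
    (n : ℕ) (hn : 1 ≤ n)
    (p : (Fin n → X) → ℝ) (hp : IsPMF p) (hppos : ∀ x, 0 < p x)
    (lam : ℝ) (hlam : 0 ≤ lam)
    (d : (Fin n → X) → (Fin n → Y) → ℝ) (hd : ∀ x y, 0 ≤ d x y)
    (q0 : (Fin n → X) → (Fin n → Y) → ℝ)
    (hq0 : IsCausalCondKernel q0) (hq0pos : ∀ x y, 0 < q0 x y)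
    (r1 : (Fin n → X) → (Fin n → Y) → ℝ)
    (hr1 : ∀ x y, r1 x y =
      q0 x y * 2 ^ (-(lam * d x y)) / ∑ y', q0 x y' * 2 ^ (-(lam * d x y')))
    (q1 : (Fin n → X) → (Fin n → Y) → ℝ) (hq1 : q1 = causalCond p r1)
    (c : (Fin n → X) → (Fin n → Y) → ℝ) (hc : ∀ x y, c x y = q1 x y / q0 x y)
    (γ : (Fin n → X) → ℝ)
    (hγ : ∀ x, γ x = (∑ y, q0 x y * 2 ^ (-(lam * d x y)))⁻¹)
    (Dk : ℝ) (hDk : Dk = ∑ x, ∑ y, p x * r1 x y * d x y) :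
    (1 / (n : ℝ)) * (-(lam * Dk) + (∑ x, p x * Real.logb 2 (γ x)) -
        Real.logb 2 (⨆ z : (Fin n → X) × (Fin n → Y), c z.1 z.2)) ≤
      Rn n p d Dk ∧
    Rn n p d Dk ≤
      (1 / (n : ℝ)) * (-(lam * Dk) + (∑ x, p x * Real.logb 2 (γ x)) -
        ∑ x, ∑ y, p x * r1 x y * Real.logb 2 (c x y)) :=
  BA_iteration_bounds_general n hn p hp lam hlam d q0 hq0pos r1 hr1 q1 hq1 c hc γ hγ Dk hDk
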